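/- Let M be an hpd n×n complex matrix and N a skew-Hermitian n×n complex matrix. Then for every x ∈ ℂⁿ, |xᴴ N x| ≤ ρ(M⁻¹N) · (xᴴ M x). -/

import Mathlib

open Matrix
open scoped ComplexOrder

section Helpers
open scoped Matrix.Norms.L2Operator MatrixOrder

theorem aux_factor {n : ℕ} (M : Matrix (Fin n) (Fin n) ℂ) (hM : M.PosDef) :
    ∃ B : Matrix (Fin n) (Fin n) ℂ, IsUnit B ∧ M = Bᴴ * B :=
  CStarAlgebra.isStrictlyPositive_iff_eq_star_mul_self.1 hM.isStrictlyPositive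

theorem aux_norm {n : ℕ} (hn : 0 < n) (S : Matrix (Fin n) (Fin n) ℂ) (hS : Sᴴ = -S) :
    ‖S‖ ≤ sSup ((fun z : ℂ => ‖z‖) '' spectrum ℂ S) := by
  have : Nonempty (Fin n) := ⟨⟨0, hn⟩⟩
  have h1 : IsStarNormal S := ⟨by
    rw [star_eq_conjTranspose, hS]; exact (Commute.refl S).neg_left⟩
  obtain ⟨z, hz, hz'⟩ := spectrum.exists_nnnorm_eq_spectralRadius S
  rw [IsStarNormal.spectralRadius_eq_nnnorm S] at hz'
  have h2 : ‖z‖ = ‖S‖ := by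
    have := ENNReal.coe_injective hz'
    exact congrArg NNReal.toReal this
  rw [← h2]
  exact le_csSup ((spectrum.isCompact S).image continuous_norm).bddAbove ⟨z, hz, rfl⟩

theorem aux_quad {n : ℕ} (S : Matrix (Fin n) (Fin n) ℂ) (y : Fin n → ℂ) :
    ‖star y ⬝ᵥ (S *ᵥ y)‖ ≤ ‖S‖ * (star y ⬝ᵥ y).re := by
  have h1 := norm_inner_le_norm (𝕜 := ℂ) (WithLp.toLp 2 y) (WithLp.toLp 2 (S *ᵥ y))
  have h2 := l2_opNorm_mulVec S (WithLp.toLp 2 y)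
  have h3 := inner_self_eq_norm_sq (𝕜 := ℂ) (WithLp.toLp 2 y)
  rw [EuclideanSpace.inner_eq_star_dotProduct, dotProduct_comm] at h1 h3
  change (star y ⬝ᵥ y).re = _ at h3
  change ‖star y ⬝ᵥ (S *ᵥ y)‖ ≤ _ at h1
  change ‖WithLp.toLp 2 (S *ᵥ y)‖ ≤ _ at h2
  rw [h3]
  nlinarith [norm_nonneg (WithLp.toLp 2 y)]

theorem aux_main {n : ℕ} (hn : 0 < n)
    (M N : Matrix (Fin n) (Fin n) ℂ) (hM : M.PosDef) (hN : Nᴴ = -N)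
    (x : Fin n → ℂ) :
    ‖star x ⬝ᵥ (N *ᵥ x)‖ ≤
      sSup ((fun z : ℂ => ‖z‖) '' spectrum ℂ (M⁻¹ * N)) * (star x ⬝ᵥ (M *ᵥ x)).re := by
  obtain ⟨B, ⟨u, rfl⟩, rfl⟩ := aux_factor M hM
  set B : Matrix (Fin n) (Fin n) ℂ := (u : Matrix (Fin n) (Fin n) ℂ) with hB
  have hu : IsUnit B.det := (isUnit_iff_isUnit_det B).1 u.isUnit
  have hu' : IsUnit Bᴴ.det := by rw [det_conjTranspose]; exact hu.star
  have hinv : ((u⁻¹ : (Matrix (Fin n) (Fin n) ℂ)ˣ) : Matrix (Fin n) (Fin n) ℂ) = B⁻¹ :=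
    coe_units_inv u
  set S := Bᴴ⁻¹ * N * B⁻¹ with hSdef
  have hS : Sᴴ = -S := by
    rw [hSdef]
    simp only [conjTranspose_mul, conjTranspose_nonsing_inv, conjTranspose_conjTranspose, hN]
    simp [mul_assoc]
  have hspec : spectrum ℂ ((Bᴴ * B)⁻¹ * N) = spectrum ℂ S := by
    rw [← spectrum.units_conjugate (a := (Bᴴ * B)⁻¹ * N) (u := u), hinv, ← hB, hSdef,
      Matrix.mul_inv_rev]
    congr 1
    simp only [← mul_assoc, mul_nonsing_inv B hu, one_mul]
  have hNS : N = Bᴴ * S * B := by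
    rw [hSdef]
    simp only [← mul_assoc, mul_nonsing_inv _ hu', one_mul]
    rw [mul_assoc, nonsing_inv_mul B hu, mul_one]
  have key : ∀ T : Matrix (Fin n) (Fin n) ℂ,
      star x ⬝ᵥ ((Bᴴ * T * B) *ᵥ x) = star (B *ᵥ x) ⬝ᵥ (T *ᵥ (B *ᵥ x)) := by
    intro T
    rw [star_mulVec, ← dotProduct_mulVec, mulVec_mulVec, mulVec_mulVec]
  have k1 := key 1
  rw [mul_one, one_mulVec] at k1
  rw [hspec, k1]
  conv_lhs => rw [hNS, key]
  refine (aux_quad S _).trans ?_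
  refine mul_le_mul_of_nonneg_right (aux_norm hn S hS) ?_
  exact (Complex.le_def.1 (dotProduct_star_self_nonneg (B *ᵥ x))).1.trans_eq
    (by rw [dotProduct_comm])

end Helpers

/-- For hpd `M` and skew-Hermitian `N`, for every vector `x`,
`|xᴴ N x| ≤ ρ(M⁻¹ N) · xᴴ M x`, where `ρ(M⁻¹N)` is the spectral radius of `M⁻¹ * N`. -/
theorem skew_rayleigh_bound_MinvN {n : ℕ}
    (M N : Matrix (Fin n) (Fin n) ℂ) (hM : M.PosDef) (hN : Nᴴ = -N)
    (x : Fin n → ℂ) :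
    ‖star x ⬝ᵥ (N *ᵥ x)‖ ≤
      sSup ((fun z : ℂ => ‖z‖) '' spectrum ℂ (M⁻¹ * N)) * (star x ⬝ᵥ (M *ᵥ x)).re := by
  rcases Nat.eq_zero_or_pos n with rfl | hn
  · simp [dotProduct]
  · exact aux_main hn M N hM hN x
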